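/- Let G be a finite graph with twins u, v (distinct vertices with N_G(u) = N_G(v)). Then the rankwidth of G equals the rankwidth of G − v, provided G − v has at least 2 vertices. In particular, adding a twin of an existing vertex never increases rankwidth. -/

import Mathlib

open Classical in
/-- The cut-rank of a vertex set `A` in a finite simple graph `G`: the rank over the
two-element field `GF(2)` of the biadjacency matrix whose rows are indexed by `A`, whose
columns are indexed by the complement `V(G) \ A`, and whose `(u, w)` entry is `1` iff
`uw` is an edge of `G`. -/
noncomputable def SimpleGraph.cutrk {V : Type*} [Finite V] (G : SimpleGraph V)
    (A : Set V) : ℕ :=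
  haveI : Fintype ↥A := Fintype.ofFinite ↥A
  haveI : Fintype ↥(Aᶜ) := Fintype.ofFinite ↥(Aᶜ)
  Matrix.rank (Matrix.of fun (u : ↥A) (w : ↥(Aᶜ)) =>
    if G.Adj u.1 w.1 then (1 : ZMod 2) else 0)

/-- `T` is a cubic tree (every vertex has degree `1` or `3`) whose leaves are bijectively
labelled by the elements of `V` via `lam`. -/
def IsRankDecompTree {V : Type*} {N : ℕ} (T : SimpleGraph (Fin N)) (lam : V → Fin N) : Prop :=
  T.IsTree ∧ (∀ w : Fin N, (T.neighborSet w).ncard = 1 ∨ (T.neighborSet w).ncard = 3) ∧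
    Function.Injective lam ∧ (∀ v : V, (T.neighborSet (lam v)).ncard = 1) ∧
    (∀ w : Fin N, (T.neighborSet w).ncard = 1 → ∃ v : V, lam v = w)

/-- `G` (with at least two vertices) admits a rank decomposition of width at most `k`:
a cubic tree whose leaves are labelled by the vertices of `G` such that for every oriented
edge `xy` of the tree, the cut-rank in `G` of the set of vertices whose leaves lie on the
`x`-side is at most `k`. -/
def HasRankDecompOfWidthLE {V : Type*} [Finite V] (G : SimpleGraph V) (k : ℕ) : Prop :=
  2 ≤ Nat.card V ∧
    ∃ (N : ℕ) (T : SimpleGraph (Fin N)) (lam : V → Fin N),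
      IsRankDecompTree T lam ∧
        ∀ x y : Fin N, T.Adj x y →
          G.cutrk {v : V | T.dist (lam v) x < T.dist (lam v) y} ≤ k

/-- The rankwidth of a finite graph: the least width of a rank decomposition of it. -/
noncomputable def rankwidth {V : Type*} [Finite V] (G : SimpleGraph V) : ℕ :=
  sInf {k | HasRankDecompOfWidthLE G k}

/-!
A side of a tree edge is a set of nodes left by that edge and by no other; pulled back along the
leaf labelling, it is the vertex set whose cut-rank is the width of the edge.

To delete a vertex, contract the edge at its leaf and then an edge at the neighbour of the leaf,
which now has degree `2`. Sides pull back along a contraction to sides, so every new width is the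
cut-rank of an old vertex set restricted to an induced subgraph.

Conversely, if `u` and `v` are twins, then `G` is the pullback of `G - v` along the map sending
`v` to `u`. Attach two new leaves `u` and `v` at the leaf of `u`: sides of old edges pull back to
preimages of old vertex sets, and preimages do not increase cut-rank, while the two new edges have
at most the width of the old leaf edge of `u`.
-/

section CutRank

variable {V : Type*} [Finite V] (G : SimpleGraph V)

theorem cutrk_eq_rank_submatrix_adjMatrix [DecidableRel G.Adj] (A : Set V)
    [Fintype ↥(Aᶜ : Set V)] :
    G.cutrk A = ((G.adjMatrix (ZMod 2)).submatrix ((↑) : A → V)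
      ((↑) : ↥(Aᶜ : Set V) → V)).rank := by
  unfold SimpleGraph.cutrk
  convert rfl using 2
  ext i j
  simp only [Matrix.submatrix_apply, SimpleGraph.adjMatrix_apply, Matrix.of_apply]
  congr

theorem cutrk_comap_preimage_le {V' : Type*} [Finite V'] (G' : SimpleGraph V') (f : V → V')
    (B : Set V') : (G'.comap f).cutrk (f ⁻¹' B) ≤ G'.cutrk B := by
  classical
  have := Fintype.ofFinite V
  have := Fintype.ofFinite V'
  have hadj : (G'.comap f).adjMatrix (ZMod 2) = (G'.adjMatrix (ZMod 2)).submatrix f f := by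
    ext a b
    simp only [SimpleGraph.adjMatrix_apply, SimpleGraph.comap_adj, Matrix.submatrix_apply]
  rw [cutrk_eq_rank_submatrix_adjMatrix, cutrk_eq_rank_submatrix_adjMatrix, hadj]
  exact Matrix.rank_submatrix_le
    ((G'.adjMatrix (ZMod 2)).submatrix ((↑) : B → V') ((↑) : ↥(Bᶜ : Set V') → V'))
    (fun a : ↥(f ⁻¹' B) => (⟨f a, a.2⟩ : B))
    (fun a : ↥((f ⁻¹' B)ᶜ : Set V) => (⟨f a, a.2⟩ : ↥(Bᶜ : Set V')))

theorem cutrk_compl (A : Set V) : G.cutrk Aᶜ = G.cutrk A := by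
  have cutrk_compl_le (B : Set V) : G.cutrk Bᶜ ≤ G.cutrk B := by
    classical
    have := Fintype.ofFinite V
    rw [cutrk_eq_rank_submatrix_adjMatrix, cutrk_eq_rank_submatrix_adjMatrix,
      ← Matrix.rank_transpose (m := B), Matrix.transpose_submatrix,
      SimpleGraph.transpose_adjMatrix]
    exact Matrix.rank_submatrix_le
      ((G.adjMatrix (ZMod 2)).submatrix ((↑) : ↥(Bᶜ : Set V) → V) ((↑) : B → V))
      (fun a : ↥(Bᶜ : Set V) => a) (fun a : ↥(Bᶜᶜ : Set V) => (⟨a, not_not.1 a.2⟩ : B))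
  exact (cutrk_compl_le A).antisymm (by simpa only [compl_compl] using cutrk_compl_le Aᶜ)

theorem cutrk_eq_zero_iff {A : Set V} :
    G.cutrk A = 0 ↔ ∀ a ∈ A, ∀ b ∉ A, ¬ G.Adj a b := by
  classical
  have := Fintype.ofFinite V
  rw [cutrk_eq_rank_submatrix_adjMatrix, Matrix.rank, Submodule.finrank_eq_zero,
    LinearMap.range_eq_bot, ← Matrix.toLin'_apply', LinearEquiv.map_eq_zero_iff,
    ← Matrix.ext_iff]
  simp

theorem cutrk_singleton_le_one (a : V) : G.cutrk {a} ≤ 1 := by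
  classical
  have := Fintype.ofFinite V
  rw [cutrk_eq_rank_submatrix_adjMatrix]
  exact (Matrix.rank_le_card_height _).trans_eq (by simp)

theorem cutrk_comap_singleton_le {V' : Type*} [Finite V'] (G' : SimpleGraph V') (f : V → V')
    (a : V) : (G'.comap f).cutrk {a} ≤ G'.cutrk {f a} := by
  rcases (G'.cutrk {f a}).eq_zero_or_pos with h0 | hpos
  · have hisolated : ∀ b, ¬ G'.Adj (f a) b := fun b hab =>
      (cutrk_eq_zero_iff G').1 h0 _ rfl b (fun hb => hab.ne hb.symm) hab
    exact ((cutrk_eq_zero_iff _).2 fun _ ha b _ => ha ▸ hisolated (f b)).le.trans (Nat.zero_le _)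
  · exact (cutrk_singleton_le_one _ a).trans hpos

end CutRank

section EdgeSides

variable {W : Type*} {T : SimpleGraph W} {x y : W} {S : Set W}

/-- `S` is the side of the edge `xy` containing `x`: the edge `xy` leaves `S`, and it is the only
edge that does. In a connected graph such an `S` is unique, and it exists for every edge exactly
when the graph is acyclic. -/
structure IsEdgeSide (T : SimpleGraph W) (x y : W) (S : Set W) : Prop where
  adj : T.Adj x y
  left_mem : x ∈ S
  right_notMem : y ∉ S
  eq_of_adj : ∀ ⦃a b⦄, a ∈ S → b ∉ S → T.Adj a b → a = x ∧ b = y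

namespace IsEdgeSide

theorem compl (h : IsEdgeSide T x y S) : IsEdgeSide T y x Sᶜ where
  adj := h.adj.symm
  left_mem := h.right_notMem
  right_notMem := not_not.2 h.left_mem
  eq_of_adj _ _ ha hb hab := (h.eq_of_adj (not_not.1 hb) ha hab.symm).symm

theorem mem_iff_of_adj (h : IsEdgeSide T x y S) {a b : W} (hab : T.Adj a b)
    (hne : s(a, b) ≠ s(x, y)) : a ∈ S ↔ b ∈ S := by
  constructor <;> intro hmem <;> by_contra hnot
  · obtain ⟨rfl, rfl⟩ := h.eq_of_adj hmem hnot hab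
    exact hne rfl
  · obtain ⟨rfl, rfl⟩ := h.eq_of_adj hmem hnot hab.symm
    exact hne Sym2.eq_swap

theorem dist_lt_of_mem (h : IsEdgeSide T x y S) (hT : T.Connected) {w : W} (hw : w ∈ S) :
    T.dist w x < T.dist w y := by
  classical
  obtain ⟨p, hp⟩ := hT.exists_walk_length_eq_dist w y
  obtain ⟨d, hd, hfst, hsnd⟩ := p.exists_boundary_dart S hw h.right_notMem
  have hx : x ∈ p.support :=
    (h.eq_of_adj hfst hsnd d.adj).1 ▸ p.dart_fst_mem_support_of_mem_darts hd
  calc T.dist w x ≤ (p.takeUntil x hx).length := SimpleGraph.dist_le _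
    _ < p.length := p.length_takeUntil_lt_length hx h.adj.ne
    _ = T.dist w y := hp

theorem eq_setOf_dist_lt (h : IsEdgeSide T x y S) (hT : T.Connected) :
    S = {w | T.dist w x < T.dist w y} := by
  ext w
  refine ⟨h.dist_lt_of_mem hT, fun hlt => ?_⟩
  by_contra hw
  exact (h.compl.dist_lt_of_mem hT hw).asymm hlt

theorem unique (h : IsEdgeSide T x y S) (hT : T.Connected) {S' : Set W}
    (h' : IsEdgeSide T x y S') : S = S' :=
  (h.eq_setOf_dist_lt hT).trans (h'.eq_setOf_dist_lt hT).symm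

theorem preimage_iso {W' : Type*} {T' : SimpleGraph W'} (e : T ≃g T') {x y : W'} {S : Set W'}
    (h : IsEdgeSide T' x y S) : IsEdgeSide T (e.symm x) (e.symm y) (e ⁻¹' S) where
  adj := e.symm.map_adj_iff.2 h.adj
  left_mem := by simpa using h.left_mem
  right_notMem := by simpa using h.right_notMem
  eq_of_adj a b ha hb hab := by
    obtain ⟨hx, hy⟩ := h.eq_of_adj ha hb (e.map_adj_iff.2 hab)
    exact ⟨by rw [← hx, e.symm_apply_apply], by rw [← hy, e.symm_apply_apply]⟩

end IsEdgeSide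

theorem isEdgeSide_singleton (h : T.neighborSet x = {y}) : IsEdgeSide T x y {x} where
  adj := h.superset rfl
  left_mem := rfl
  right_notMem hyx := T.irrefl (h.superset hyx.symm : T.Adj x x)
  eq_of_adj _ _ ha _ hab := ⟨ha, h.subset (ha ▸ hab)⟩

theorem isAcyclic_iff_forall_adj_exists_isEdgeSide :
    T.IsAcyclic ↔ ∀ x y, T.Adj x y → ∃ S, IsEdgeSide T x y S := by
  rw [SimpleGraph.isAcyclic_iff_forall_adj_isBridge]
  refine forall₂_congr fun x y => forall_congr' fun hxy => ?_
  rw [SimpleGraph.isBridge_iff]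
  constructor
  · intro hbridge
    refine ⟨{w | (T.deleteEdges {s(x, y)}).Reachable x w}, hxy, .refl _, hbridge, ?_⟩
    intro a b ha hb hab
    have hedge : s(a, b) = s(x, y) := by
      by_contra hne
      exact hb (ha.trans (SimpleGraph.deleteEdges_adj.2 ⟨hab, hne⟩).reachable)
    rcases Sym2.eq_iff.1 hedge with hkeep | ⟨rfl, rfl⟩
    · exact hkeep
    · exact absurd ha hbridge
  · rintro ⟨S, hS⟩ ⟨p⟩
    obtain ⟨d, -, hfst, hsnd⟩ := p.exists_boundary_dart S hS.left_mem hS.right_notMem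
    obtain ⟨hadj, hne⟩ := SimpleGraph.deleteEdges_adj.1 d.adj
    obtain ⟨hx, hy⟩ := hS.eq_of_adj hfst hsnd hadj
    exact hne (by rw [hx, hy]; rfl)

end EdgeSides

section Contraction

universe u

variable {W : Type u} {W' : Type*} {T : SimpleGraph W} {π : W → W'}

theorem connected_map (hT : T.Connected) (hπ : Function.Surjective π) :
    (T.map π).Connected := by
  have reachable_map {a b : W} (p : T.Walk a b) : (T.map π).Reachable (π a) (π b) := by
    induction p with
    | nil => exact .refl _
    | @cons a b _ hab _ ih =>
      by_cases hne : π a = π b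
      · rwa [hne]
      · exact (SimpleGraph.map_adj_apply' hab hne).reachable.trans ih
  have : Nonempty W' := hT.nonempty.map π
  refine ⟨hπ.forall₂.2 fun a b => ?_⟩
  obtain ⟨p⟩ := hT.preconnected a b
  exact reachable_map p

theorem IsEdgeSide.mem_iff_of_apply_eq {x y : W} {S : Set W} (h : IsEdgeSide T x y S)
    (hπ : ∀ ⦃a b⦄, π a = π b → a = b ∨ T.Adj a b) (hxy : π x ≠ π y) {a b : W}
    (hab : π a = π b) : a ∈ S ↔ b ∈ S := by
  rcases hπ hab with rfl | hadj
  · rfl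
  · refine h.mem_iff_of_adj hadj fun hedge => hxy ?_
    rcases Sym2.eq_iff.1 hedge with ⟨rfl, rfl⟩ | ⟨rfl, rfl⟩
    · exact hab
    · exact hab.symm

theorem IsEdgeSide.map {x y : W} {S : Set W} (h : IsEdgeSide T x y S)
    (hπ : ∀ ⦃a b⦄, π a = π b → a = b ∨ T.Adj a b) (hxy : π x ≠ π y) :
    IsEdgeSide (T.map π) (π x) (π y) (π '' S) := by
  have apply_mem_image {a : W} : π a ∈ π '' S ↔ a ∈ S :=
    ⟨fun ⟨_, hb, hba⟩ => (h.mem_iff_of_apply_eq hπ hxy hba).1 hb, Set.mem_image_of_mem π⟩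
  refine ⟨SimpleGraph.map_adj_apply' h.adj hxy, apply_mem_image.2 h.left_mem,
    mt apply_mem_image.1 h.right_notMem, ?_⟩
  rintro _ _ ha hb ⟨-, a, b, hab, rfl, rfl⟩
  obtain ⟨rfl, rfl⟩ := h.eq_of_adj (apply_mem_image.1 ha) (mt apply_mem_image.2 hb) hab
  exact ⟨rfl, rfl⟩

theorem IsEdgeSide.exists_preimage {x y : W'} {S : Set W'} (h : IsEdgeSide (T.map π) x y S)
    (hT : T.IsAcyclic) (hπ : ∀ ⦃a b⦄, π a = π b → a = b ∨ T.Adj a b) :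
    ∃ x' y', IsEdgeSide T x' y' (π ⁻¹' S) := by
  obtain ⟨hne, x, y, hxy, rfl, rfl⟩ := h.adj
  obtain ⟨R, hR⟩ := isAcyclic_iff_forall_adj_exists_isEdgeSide.1 hT x y hxy
  refine ⟨x, y, hxy, h.left_mem, h.right_notMem, fun a b ha hb hab => ?_⟩
  have hne' : π a ≠ π b := fun hab => hb (Set.mem_preimage.2 (hab ▸ ha))
  obtain ⟨hax, hby⟩ := h.eq_of_adj ha hb (SimpleGraph.map_adj_apply' hab hne')
  exact hR.eq_of_adj ((hR.mem_iff_of_apply_eq hπ hne hax).2 hR.left_mem)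
    (mt (hR.mem_iff_of_apply_eq hπ hne hby).1 hR.right_notMem) hab

theorem isTree_map (hT : T.IsTree) (hπ : Function.Surjective π)
    (hfiber : ∀ ⦃a b⦄, π a = π b → a = b ∨ T.Adj a b) : (T.map π).IsTree := by
  refine ⟨connected_map hT.1 hπ, isAcyclic_iff_forall_adj_exists_isEdgeSide.2 ?_⟩
  rintro _ _ ⟨hne, x, y, hxy, rfl, rfl⟩
  obtain ⟨S, hS⟩ := isAcyclic_iff_forall_adj_exists_isEdgeSide.1 hT.2 x y hxy
  exact ⟨π '' S, hS.map hfiber hne⟩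

theorem not_adj_of_adj_adj_of_isAcyclic (hT : T.IsAcyclic) {a p q : W} (hp : T.Adj p a)
    (hpq : T.Adj p q) : ¬ T.Adj a q := by
  classical
  exact fun hq => hT.cliqueFree le_rfl {p, a, q}
    (SimpleGraph.is3Clique_triple_iff.2 ⟨hp, hpq, hq⟩)

variable [DecidableEq W] {p q : W}

/-- The map contracting the pair `p, q` to one node and injective otherwise. Its codomain is the
node set without `p`, and `T.map (contractPair p q)` is `T` with the edge `pq` contracted. -/
def contractPair (p q : W) : W → Set.range (Function.update id p q) :=
  Set.rangeFactorization (Function.update id p q)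

theorem contractPair_surjective (p q : W) : Function.Surjective (contractPair p q) :=
  Set.rangeFactorization_surjective

theorem contractPair_eq_iff {a b : W} :
    contractPair p q a = contractPair p q b ↔ a = b ∨ s(a, b) = s(p, q) := by
  simp only [contractPair, Set.rangeFactorization_eq_rangeFactorization_iff,
    Function.update_apply, id, Sym2.eq_iff]
  grind

theorem contractPair_left_eq_right (p q : W) : contractPair p q p = contractPair p q q :=
  contractPair_eq_iff.2 (.inr rfl)

theorem contractPair_injOn_compl (p q : W) : Set.InjOn (contractPair p q) {p}ᶜ := by
  intro a ha b hb hab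
  simp only [contractPair_eq_iff, Sym2.eq_iff] at hab
  grind

theorem eq_or_adj_of_contractPair_eq (hpq : T.Adj p q) ⦃a b : W⦄
    (hab : contractPair p q a = contractPair p q b) : a = b ∨ T.Adj a b :=
  (contractPair_eq_iff.1 hab).imp_right fun h => (T.adj_congr_of_sym2 h).2 hpq

theorem neighborSet_map_contractPair_of_ne {a : W} (hp : a ≠ p) (hq : a ≠ q) :
    (T.map (contractPair p q)).neighborSet (contractPair p q a) =
      contractPair p q '' T.neighborSet a := by
  have eq_of_apply_eq {b : W} (h : contractPair p q b = contractPair p q a) : b = a := by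
    grind [contractPair_eq_iff]
  ext z
  constructor
  · rintro ⟨-, b, c, hbc, hb, rfl⟩
    exact ⟨c, eq_of_apply_eq hb ▸ hbc, rfl⟩
  · rintro ⟨c, hc, rfl⟩
    exact SimpleGraph.map_adj_apply' hc fun h => hc.ne (eq_of_apply_eq h.symm).symm

theorem neighborSet_map_contractPair_right :
    (T.map (contractPair p q)).neighborSet (contractPair p q q) =
      contractPair p q '' (T.neighborSet p \ {q} ∪ T.neighborSet q \ {p}) := by
  have apply_eq_iff {b : W} : contractPair p q b = contractPair p q q ↔ b = p ∨ b = q := by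
    grind [contractPair_eq_iff]
  ext z
  constructor
  · rintro ⟨hne, b, c, hbc, hb, rfl⟩
    have hc := mt apply_eq_iff.2 hne.symm
    rcases apply_eq_iff.1 hb with rfl | rfl
    · exact ⟨c, .inl ⟨hbc, fun h => hc (.inr h)⟩, rfl⟩
    · exact ⟨c, .inr ⟨hbc, fun h => hc (.inl h)⟩, rfl⟩
  · rintro ⟨c, ⟨hc, hcq⟩ | ⟨hc, hcp⟩, rfl⟩
    · rw [← contractPair_left_eq_right]
      refine SimpleGraph.map_adj_apply' hc fun h => ?_
      rw [contractPair_left_eq_right] at h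
      exact (apply_eq_iff.1 h.symm).elim hc.ne.symm hcq
    · exact SimpleGraph.map_adj_apply' hc fun h => (apply_eq_iff.1 h.symm).elim hcp hc.ne.symm

theorem ncard_neighborSet_map_contractPair_of_ne (hT : T.IsAcyclic) (hpq : T.Adj p q) {a : W}
    (hp : a ≠ p) (hq : a ≠ q) :
    ((T.map (contractPair p q)).neighborSet (contractPair p q a)).ncard =
      (T.neighborSet a).ncard := by
  rw [neighborSet_map_contractPair_of_ne hp hq]
  refine Set.InjOn.ncard_image fun b (hb : T.Adj a b) c (hc : T.Adj a c) hbc => ?_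
  have htriangle (hpa : T.Adj a p) : ¬ T.Adj a q :=
    not_adj_of_adj_adj_of_isAcyclic hT hpa.symm hpq
  grind [contractPair_eq_iff]

theorem ncard_neighborSet_map_contractPair_right [Finite W] (hT : T.IsAcyclic)
    (hpq : T.Adj p q) :
    ((T.map (contractPair p q)).neighborSet (contractPair p q q)).ncard + 2 =
      (T.neighborSet p).ncard + (T.neighborSet q).ncard := by
  have hinj : Set.InjOn (contractPair p q) (T.neighborSet p \ {q} ∪ T.neighborSet q \ {p}) :=
    (contractPair_injOn_compl p q).mono (by
      rintro a (⟨ha, -⟩ | ⟨-, ha⟩)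
      · exact ha.ne.symm
      · exact ha)
  have hdisj : Disjoint (T.neighborSet p \ {q}) (T.neighborSet q \ {p}) :=
    Set.disjoint_left.2 fun a hpa hqa =>
      not_adj_of_adj_adj_of_isAcyclic hT hpa.1 hpq hqa.1.symm
  rw [neighborSet_map_contractPair_right, hinj.ncard_image, Set.ncard_union_eq hdisj]
  have hp := Set.ncard_sdiff_singleton_add_one (s := T.neighborSet p) hpq
  have hq := Set.ncard_sdiff_singleton_add_one (s := T.neighborSet q) hpq.symm
  omega

theorem contractPair_bijOn_compl (hpq : p ≠ q) :
    Set.BijOn (contractPair p q) {p}ᶜ Set.univ := by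
  refine ⟨Set.mapsTo_univ _ _, contractPair_injOn_compl p q, fun z _ => ?_⟩
  obtain ⟨a, rfl⟩ := contractPair_surjective p q z
  by_cases ha : a = p
  · exact ⟨q, hpq.symm, ha ▸ (contractPair_left_eq_right p q).symm⟩
  · exact ⟨a, ha, rfl⟩

/-- `π` exhibits the tree `T'` as obtained from `T` by absorbing the nodes of `s` into the
remaining ones, which keep their degrees. For `s` consisting of a leaf and its neighbour of
degree `3`, this is deletion of the leaf followed by suppression of the resulting node of
degree `2`. -/
structure IsSuppression (T : SimpleGraph W) (T' : SimpleGraph W') (π : W → W') (s : Set W) :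
    Prop where
  isTree : T'.IsTree
  bijOn : Set.BijOn π sᶜ Set.univ
  ncard_neighborSet : ∀ a ∉ s, (T'.neighborSet (π a)).ncard = (T.neighborSet a).ncard
  exists_preimage : ∀ ⦃x y S⦄, IsEdgeSide T' x y S → ∃ x' y', IsEdgeSide T x' y' (π ⁻¹' S)

theorem isSuppression_contractPair [Finite W] (hT : T.IsTree) (hpq : T.Adj p q)
    (hp : (T.neighborSet p).ncard = 2) :
    IsSuppression T (T.map (contractPair p q)) (contractPair p q) {p} where
  isTree := isTree_map hT (contractPair_surjective p q) (eq_or_adj_of_contractPair_eq hpq)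
  bijOn := contractPair_bijOn_compl hpq.ne
  ncard_neighborSet a ha := by
    by_cases haq : a = q
    · subst haq
      have := ncard_neighborSet_map_contractPair_right hT.2 hpq
      omega
    · exact ncard_neighborSet_map_contractPair_of_ne hT.2 hpq ha haq
  exists_preimage _ _ _ hS := hS.exists_preimage hT.2 (eq_or_adj_of_contractPair_eq hpq)

theorem exists_isSuppression_of_leaf {W : Type u} [Finite W] {T : SimpleGraph W}
    (hT : T.IsTree) {l p : W} (hlp : T.Adj l p) (hl : (T.neighborSet l).ncard = 1)
    (hp : (T.neighborSet p).ncard = 3) :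
    ∃ (W' : Type u) (T' : SimpleGraph W') (π : W → W'), IsSuppression T T' π {l, p} := by
  classical
  set π₁ := contractPair l p
  set T₁ := T.map π₁
  have hfiber₁ := eq_or_adj_of_contractPair_eq hlp
  have hT₁ : T₁.IsTree := isTree_map hT (contractPair_surjective l p) hfiber₁
  have hdeg_p : (T₁.neighborSet (π₁ p)).ncard = 2 := by
    have : (T₁.neighborSet (π₁ p)).ncard + 2 = _ :=
      ncard_neighborSet_map_contractPair_right hT.2 hlp
    omega
  obtain ⟨q, hpq⟩ : (T₁.neighborSet (π₁ p)).Nonempty :=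
    Set.nonempty_of_ncard_ne_zero (by omega)
  have hsupp := isSuppression_contractPair hT₁ hpq hdeg_p
  have hbij₁ : Set.BijOn π₁ {l, p}ᶜ {π₁ p}ᶜ := by
    have hcompl : ({l, p} : Set W)ᶜ = {l}ᶜ \ {p} := by
      rw [Set.insert_eq, Set.compl_union, Set.sdiff_eq]
    rw [hcompl, Set.compl_eq_univ_sdiff {π₁ p}]
    exact (contractPair_bijOn_compl hlp.ne).sdiff_singleton hlp.ne.symm
  refine ⟨_, _, contractPair (π₁ p) q ∘ π₁, hsupp.isTree, hsupp.bijOn.comp hbij₁, ?_, ?_⟩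
  · intro a ha
    rw [Function.comp_apply, hsupp.ncard_neighborSet _ (hbij₁.mapsTo ha)]
    exact ncard_neighborSet_map_contractPair_of_ne hT.2 hlp (mt .inl ha) (mt .inr ha)
  · intro x y S hS
    obtain ⟨x₁, y₁, hS₁⟩ := hsupp.exists_preimage hS
    exact hS₁.exists_preimage hT.2 hfiber₁

end Contraction

section AttachLeaves

variable {W ι : Type*} {T : SimpleGraph W} {l : W}

/-- The graph `T` with new nodes indexed by `ι`, each adjacent to `l` only. -/
def attachLeaves (T : SimpleGraph W) (l : W) (ι : Type*) : SimpleGraph (W ⊕ ι) where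
  Adj
    | .inl a, .inl b => T.Adj a b
    | .inl a, .inr _ => a = l
    | .inr _, .inl b => b = l
    | .inr _, .inr _ => False
  symm := ⟨by
    rintro (a | i) (b | j) h
    exacts [SimpleGraph.Adj.symm h, h, h, h]⟩
  loopless := ⟨by
    rintro (a | i) h
    exacts [T.irrefl h, h]⟩

theorem neighborSet_attachLeaves_inr (i : ι) :
    (attachLeaves T l ι).neighborSet (.inr i) = {.inl l} := by
  ext (a | j)
  · exact Sum.inl_injective.eq_iff.symm
  · exact iff_of_false not_false Sum.inr_ne_inl

theorem neighborSet_attachLeaves_inl_of_ne {a : W} (ha : a ≠ l) :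
    (attachLeaves T l ι).neighborSet (.inl a) = .inl '' T.neighborSet a := by
  ext (b | j)
  · exact (Sum.inl_injective.mem_set_image (s := T.neighborSet a)).symm
  · exact iff_of_false ha (by simp)

theorem neighborSet_attachLeaves_inl_self :
    (attachLeaves T l ι).neighborSet (.inl l) = .inl '' T.neighborSet l ∪ Set.range .inr := by
  ext (b | j)
  · simp only [Set.mem_union, Sum.inl_injective.mem_set_image, Set.mem_range, reduceCtorEq,
      exists_false, or_false]
    rfl
  · exact iff_of_true rfl (.inr ⟨j, rfl⟩)

theorem ncard_neighborSet_attachLeaves_inl_of_ne {a : W} (ha : a ≠ l) :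
    ((attachLeaves T l ι).neighborSet (.inl a)).ncard = (T.neighborSet a).ncard := by
  rw [neighborSet_attachLeaves_inl_of_ne ha, Set.ncard_image_of_injective _ Sum.inl_injective]

theorem ncard_neighborSet_attachLeaves_inl_self [Finite W] [Finite ι] :
    ((attachLeaves T l ι).neighborSet (.inl l)).ncard = (T.neighborSet l).ncard + Nat.card ι := by
  rw [neighborSet_attachLeaves_inl_self, Set.ncard_union_eq,
    Set.ncard_image_of_injective _ Sum.inl_injective,
    Set.ncard_range_of_injective Sum.inr_injective]
  exact Set.disjoint_left.2 (by rintro _ ⟨a, -, rfl⟩ ⟨i, hi⟩; exact Sum.inr_ne_inl hi)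

theorem IsEdgeSide.attachLeaves {x y : W} {S : Set W} (h : IsEdgeSide T x y S) :
    IsEdgeSide (attachLeaves T l ι) (.inl x) (.inl y) (Sum.elim id (fun _ => l) ⁻¹' S) where
  adj := h.adj
  left_mem := h.left_mem
  right_notMem := h.right_notMem
  eq_of_adj := by
    rintro (a | i) (b | j) ha hb hab
    · exact (h.eq_of_adj ha hb hab).imp (congrArg _) (congrArg _)
    · exact absurd (hab ▸ ha) hb
    · exact absurd ha (hab ▸ hb)
    · exact hab.elim

theorem connected_attachLeaves (hT : T.Connected) (l : W) (ι : Type*) :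
    (attachLeaves T l ι).Connected := by
  refine SimpleGraph.connected_iff_exists_forall_reachable _ |>.2 ⟨.inl l, ?_⟩
  rintro (a | i)
  · exact (hT.preconnected l a).map ⟨Sum.inl, id⟩
  · exact SimpleGraph.Adj.reachable (G := attachLeaves T l ι) (u := .inl l) (v := .inr i) rfl

theorem isTree_attachLeaves (hT : T.IsTree) (l : W) (ι : Type*) :
    (attachLeaves T l ι).IsTree := by
  refine ⟨connected_attachLeaves hT.1 l ι, isAcyclic_iff_forall_adj_exists_isEdgeSide.2 ?_⟩
  have hleaf (i : ι) := isEdgeSide_singleton (neighborSet_attachLeaves_inr (T := T) (l := l) i)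
  rintro (a | i) (b | j) hab
  · obtain ⟨S, hS⟩ := isAcyclic_iff_forall_adj_exists_isEdgeSide.1 hT.2 a b hab
    exact ⟨_, hS.attachLeaves⟩
  · obtain rfl : a = l := hab
    exact ⟨_, (hleaf j).compl⟩
  · obtain rfl : b = l := hab
    exact ⟨_, hleaf i⟩
  · exact hab.elim

end AttachLeaves

section LeafLabelledCubicTree

variable {V W W' : Type*} {T : SimpleGraph W} {T' : SimpleGraph W'} {leaf : V → W}

/-- `T` is a cubic tree and `leaf` is a bijection from `V` onto its leaves: the notion
`IsRankDecompTree` for trees on an arbitrary node type. -/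
structure IsLeafLabelledCubicTree (T : SimpleGraph W) (leaf : V → W) : Prop where
  isTree : T.IsTree
  ncard_neighborSet : ∀ w, (T.neighborSet w).ncard = 1 ∨ (T.neighborSet w).ncard = 3
  leaf_injective : Function.Injective leaf
  range_leaf : Set.range leaf = {w | (T.neighborSet w).ncard = 1}

theorem isRankDecompTree_iff {N : ℕ} {T : SimpleGraph (Fin N)} {leaf : V → Fin N} :
    IsRankDecompTree T leaf ↔ IsLeafLabelledCubicTree T leaf := by
  constructor
  · rintro ⟨hT, hcubic, hinj, hleaf, hsurj⟩
    exact ⟨hT, hcubic, hinj, Set.Subset.antisymm (Set.range_subset_iff.2 hleaf) hsurj⟩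
  · rintro ⟨hT, hcubic, hinj, hrange⟩
    exact ⟨hT, hcubic, hinj, Set.range_subset_iff.1 hrange.subset, hrange.superset⟩

theorem IsLeafLabelledCubicTree.ncard_neighborSet_leaf (h : IsLeafLabelledCubicTree T leaf)
    (v : V) : (T.neighborSet (leaf v)).ncard = 1 :=
  h.range_leaf.subset ⟨v, rfl⟩

theorem IsLeafLabelledCubicTree.comp_iso (h : IsLeafLabelledCubicTree T leaf) (e : T ≃g T') :
    IsLeafLabelledCubicTree T' (e ∘ leaf) := by
  have hdeg (w : W') : (T'.neighborSet w).ncard = (T.neighborSet (e.symm w)).ncard :=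
    Nat.card_congr (e.symm.mapNeighborSet w)
  refine ⟨e.isTree_iff.1 h.isTree, fun w => ?_, e.injective.comp h.leaf_injective, ?_⟩
  · rw [hdeg]
    exact h.ncard_neighborSet _
  · rw [Set.range_comp, h.range_leaf]
    simp only [hdeg]
    exact e.toEquiv.image_eq_preimage_symm _

theorem IsLeafLabelledCubicTree.comp_isSuppression {π : W → W'} {s : Set W}
    (h : IsLeafLabelledCubicTree T leaf) (hπ : IsSuppression T T' π s) :
    IsLeafLabelledCubicTree T' fun w : ↥(leaf ⁻¹' s)ᶜ => π (leaf w) := by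
  have exists_apply_eq (z : W') : ∃ a ∉ s, π a = z := hπ.bijOn.surjOn (Set.mem_univ z)
  refine ⟨hπ.isTree, fun z => ?_, fun v w hvw => ?_, Set.Subset.antisymm ?_ fun z hz => ?_⟩
  · obtain ⟨a, ha, rfl⟩ := exists_apply_eq z
    rw [hπ.ncard_neighborSet a ha]
    exact h.ncard_neighborSet a
  · exact Subtype.ext (h.leaf_injective (hπ.bijOn.injOn v.2 w.2 hvw))
  · rintro _ ⟨w, rfl⟩
    exact (hπ.ncard_neighborSet _ w.2).trans (h.ncard_neighborSet_leaf w)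
  · obtain ⟨a, ha, rfl⟩ := exists_apply_eq z
    obtain ⟨w, rfl⟩ := h.range_leaf.superset ((hπ.ncard_neighborSet a ha).symm.trans hz)
    exact ⟨⟨w, ha⟩, rfl⟩

theorem IsLeafLabelledCubicTree.exists_adj_leaf (h : IsLeafLabelledCubicTree T leaf)
    (hV : 3 ≤ Nat.card V) (v : V) :
    ∃ p, T.Adj (leaf v) p ∧ (T.neighborSet p).ncard = 3 := by
  obtain ⟨p, hp⟩ := Set.ncard_eq_one.1 (h.ncard_neighborSet_leaf v)
  have hvp : p ∈ T.neighborSet (leaf v) := hp ▸ rfl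
  refine ⟨p, hvp, (h.ncard_neighborSet p).resolve_left fun hdeg => ?_⟩
  -- Otherwise the edge between the leaves `leaf v` and `p` is the whole tree.
  obtain ⟨q, hq⟩ := Set.ncard_eq_one.1 hdeg
  have hqv : leaf v = q := hq.subset hvp.symm
  obtain ⟨_, ⟨w, rfl⟩, hw⟩ : ∃ a ∈ Set.range leaf, a ∉ ({leaf v, p} : Set W) := by
    refine Set.exists_mem_notMem_of_ncard_lt_ncard ?_
    rw [Set.ncard_range_of_injective h.leaf_injective]
    exact (Set.ncard_insert_le _ _).trans_lt (by rwa [Set.ncard_singleton])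
  obtain ⟨walk⟩ := h.isTree.1.preconnected (leaf v) (leaf w)
  obtain ⟨d, -, hfst | hfst, hsnd⟩ := walk.exists_boundary_dart _ (Set.mem_insert _ _) hw
  · exact hsnd (.inr (hp.subset (hfst ▸ d.adj)))
  · exact hsnd (.inl ((hq.subset (hfst ▸ d.adj)).trans hqv.symm))

end LeafLabelledCubicTree

section SplitLeaf

variable {V V' W : Type*} {T : SimpleGraph W} {f : V → V'} {t : V'} {leaf : V' → W}

open Classical in
/-- The labelling that `leaf` induces through `f` after splitting the leaf of `t` into one leaf for
each vertex in the fibre of `t`. -/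
noncomputable def splitLeaf (f : V → V') (t : V') (leaf : V' → W) (v : V) :
    W ⊕ f ⁻¹' {t} :=
  if h : f v = t then .inr ⟨v, h⟩ else .inl (leaf (f v))

theorem splitLeaf_of_eq {v : V} (h : f v = t) :
    splitLeaf f t leaf v = .inr ⟨v, h⟩ :=
  dif_pos h

theorem splitLeaf_of_ne {v : V} (h : f v ≠ t) :
    splitLeaf f t leaf v = .inl (leaf (f v)) :=
  dif_neg h

theorem elim_splitLeaf (f : V → V') (t : V') (leaf : V' → W) (v : V) :
    Sum.elim id (fun _ => leaf t) (splitLeaf f t leaf v) = leaf (f v) := by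
  by_cases h : f v = t
  · rw [splitLeaf_of_eq h, Sum.elim_inr, h]
  · rw [splitLeaf_of_ne h, Sum.elim_inl, id]

theorem splitLeaf_eq_inr_iff {v : V} {i : f ⁻¹' {t}} :
    splitLeaf f t leaf v = .inr i ↔ v = i := by
  by_cases h : f v = t
  · rw [splitLeaf_of_eq h, Sum.inr_injective.eq_iff, Subtype.ext_iff]
  · rw [splitLeaf_of_ne h]
    exact iff_of_false Sum.inl_ne_inr fun hvi => h (hvi ▸ i.2)

theorem injective_splitLeaf (hleaf : Function.Injective leaf)
    (hinj : Set.InjOn f (f ⁻¹' {t})ᶜ) : Function.Injective (splitLeaf f t leaf) := by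
  intro v w hvw
  by_cases hw : f w = t
  · rwa [splitLeaf_of_eq hw, splitLeaf_eq_inr_iff] at hvw
  by_cases hv : f v = t
  · rw [splitLeaf_of_eq hv, eq_comm, splitLeaf_eq_inr_iff] at hvw
    exact hvw.symm
  rw [splitLeaf_of_ne hv, splitLeaf_of_ne hw] at hvw
  exact hinj hv hw (hleaf (Sum.inl_injective hvw))

theorem range_splitLeaf (hf : Function.Surjective f) (hleaf : Function.Injective leaf) :
    Set.range (splitLeaf f t leaf) = Sum.inl '' (Set.range leaf \ {leaf t}) ∪ Set.range .inr := by
  refine Set.Subset.antisymm ?_ (Set.union_subset ?_ ?_)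
  · rintro _ ⟨v, rfl⟩
    by_cases hv : f v = t
    · exact .inr ⟨_, (splitLeaf_of_eq hv).symm⟩
    · exact .inl ⟨_, ⟨⟨f v, rfl⟩, hleaf.ne hv⟩, (splitLeaf_of_ne hv).symm⟩
  · rintro _ ⟨_, ⟨⟨s, rfl⟩, hs⟩, rfl⟩
    obtain ⟨v, rfl⟩ := hf s
    exact ⟨v, splitLeaf_of_ne fun hv => hs (congrArg leaf hv)⟩
  · rintro _ ⟨i, rfl⟩
    exact ⟨i, splitLeaf_eq_inr_iff.2 rfl⟩

theorem IsLeafLabelledCubicTree.attachLeaves_splitLeaf [Finite W]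
    (h : IsLeafLabelledCubicTree T leaf) (hf : Function.Surjective f)
    (hfiber : (f ⁻¹' {t}).ncard = 2) (hinj : Set.InjOn f (f ⁻¹' {t})ᶜ) :
    IsLeafLabelledCubicTree (attachLeaves T (leaf t) (f ⁻¹' {t})) (splitLeaf f t leaf) := by
  have : Finite (f ⁻¹' {t}) := Set.finite_of_ncard_ne_zero (by omega)
  have hdeg_old :
      ((attachLeaves T (leaf t) (f ⁻¹' {t})).neighborSet (.inl (leaf t))).ncard = 3 := by
    rw [ncard_neighborSet_attachLeaves_inl_self, h.ncard_neighborSet_leaf, Nat.card_coe_set_eq,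
      hfiber]
  have hdeg_new (i : f ⁻¹' {t}) :
      ((attachLeaves T (leaf t) (f ⁻¹' {t})).neighborSet (.inr i)).ncard = 1 := by
    rw [neighborSet_attachLeaves_inr, Set.ncard_singleton]
  refine ⟨isTree_attachLeaves h.isTree _ _, ?_, injective_splitLeaf h.leaf_injective hinj, ?_⟩
  · rintro (a | i)
    · by_cases ha : a = leaf t
      · exact .inr (ha ▸ hdeg_old)
      · rw [ncard_neighborSet_attachLeaves_inl_of_ne ha]
        exact h.ncard_neighborSet a
    · exact .inl (hdeg_new i)
  · rw [range_splitLeaf hf h.leaf_injective, h.range_leaf]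
    ext (a | i)
    · by_cases ha : a = leaf t
      · simp [-Set.ncard_eq_one, ha, hdeg_old]
      · simp [-Set.ncard_eq_one, ha, ncard_neighborSet_attachLeaves_inl_of_ne]
    · simp [-Set.ncard_eq_one, hdeg_new]

end SplitLeaf

section Width

variable {V V' W W' : Type*} [Finite V] {G : SimpleGraph V} {k : ℕ} {T : SimpleGraph W}
  {T' : SimpleGraph W'} {leaf : V → W}

/-- Every edge of the tree `T`, with its leaves labelled by the vertices of `G`, has width at most
`k`. -/
def DecompWidthLE (G : SimpleGraph V) (T : SimpleGraph W) (leaf : V → W) (k : ℕ) : Prop :=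
  ∀ ⦃x y S⦄, IsEdgeSide T x y S → G.cutrk (leaf ⁻¹' S) ≤ k

theorem decompWidthLE_iff_forall_adj (hT : T.IsTree) (leaf : V → W) :
    DecompWidthLE G T leaf k ↔
      ∀ x y, T.Adj x y → G.cutrk {v | T.dist (leaf v) x < T.dist (leaf v) y} ≤ k := by
  constructor
  · intro h x y hxy
    obtain ⟨S, hS⟩ := isAcyclic_iff_forall_adj_exists_isEdgeSide.1 hT.2 x y hxy
    have := h hS
    rwa [hS.eq_setOf_dist_lt hT.1] at this
  · intro h x y S hS
    rw [hS.eq_setOf_dist_lt hT.1]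
    exact h x y hS.adj

theorem DecompWidthLE.comp_iso (h : DecompWidthLE G T leaf k) (e : T ≃g T') :
    DecompWidthLE G T' (e ∘ leaf) k :=
  fun _ _ _ hS => h (hS.preimage_iso e)

theorem DecompWidthLE.induce_comp_isSuppression {π : W → W'} {s : Set W}
    (h : DecompWidthLE G T leaf k) (hπ : IsSuppression T T' π s) (A : Set V) :
    DecompWidthLE (G.induce A) T' (fun w : A => π (leaf w)) k := by
  intro x y S hS
  obtain ⟨x', y', hS'⟩ := hπ.exists_preimage hS
  exact (cutrk_comap_preimage_le G Subtype.val (leaf ⁻¹' (π ⁻¹' S))).trans (h hS')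

theorem DecompWidthLE.attachLeaves_splitLeaf [Finite V'] {G' : SimpleGraph V'} {leaf : V' → W}
    (h : DecompWidthLE G' T leaf k) (hT : IsLeafLabelledCubicTree T leaf) (f : V → V') (t : V') :
    DecompWidthLE (G'.comap f) (attachLeaves T (leaf t) (f ⁻¹' {t})) (splitLeaf f t leaf) k := by
  have hconn := connected_attachLeaves hT.isTree.1 (leaf t) (f ⁻¹' {t})
  have width_singleton_le : G'.cutrk {t} ≤ k := by
    obtain ⟨p, hp⟩ := Set.ncard_eq_one.1 (hT.ncard_neighborSet_leaf t)
    have := h (isEdgeSide_singleton hp)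
    rwa [← Set.image_singleton, hT.leaf_injective.preimage_image] at this
  have width_new_le {i : f ⁻¹' {t}} {S : Set (W ⊕ f ⁻¹' {t})}
      (hS : IsEdgeSide (attachLeaves T (leaf t) (f ⁻¹' {t})) (.inr i) (.inl (leaf t)) S) :
      (G'.comap f).cutrk (splitLeaf f t leaf ⁻¹' S) ≤ k := by
    obtain rfl := hS.unique hconn (isEdgeSide_singleton (neighborSet_attachLeaves_inr i))
    have hpre : splitLeaf f t leaf ⁻¹' {.inr i} = {i.1} :=
      Set.ext fun v => splitLeaf_eq_inr_iff
    rw [hpre]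
    exact (cutrk_comap_singleton_le G' f i).trans (i.2.symm ▸ width_singleton_le)
  rintro (a | i) (b | j) S hS
  · obtain ⟨R, hR⟩ := isAcyclic_iff_forall_adj_exists_isEdgeSide.1 hT.isTree.2 a b hS.adj
    obtain rfl := hS.unique hconn hR.attachLeaves
    have hpre : splitLeaf f t leaf ⁻¹' (Sum.elim id (fun _ => leaf t) ⁻¹' R) =
        f ⁻¹' (leaf ⁻¹' R) := by
      ext v
      simp only [Set.mem_preimage, elim_splitLeaf]
    rw [hpre]
    exact (cutrk_comap_preimage_le G' f _).trans (h hR)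
  · obtain rfl : a = leaf t := hS.adj
    rw [← cutrk_compl]
    exact width_new_le hS.compl
  · obtain rfl : b = leaf t := hS.adj
    exact width_new_le hS
  · exact hS.adj.elim

theorem hasRankDecompOfWidthLE_iff :
    HasRankDecompOfWidthLE G k ↔ 2 ≤ Nat.card V ∧
      ∃ (N : ℕ) (T : SimpleGraph (Fin N)) (leaf : V → Fin N),
        IsLeafLabelledCubicTree T leaf ∧ DecompWidthLE G T leaf k := by
  refine and_congr_right fun _ => exists₃_congr fun N T leaf => ?_
  rw [isRankDecompTree_iff]
  exact and_congr_right fun hT => (decompWidthLE_iff_forall_adj hT.isTree leaf).symm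

theorem IsLeafLabelledCubicTree.hasRankDecompOfWidthLE [Finite W]
    (h : IsLeafLabelledCubicTree T leaf) (hV : 2 ≤ Nat.card V)
    (hwidth : DecompWidthLE G T leaf k) : HasRankDecompOfWidthLE G k := by
  have := Fintype.ofFinite W
  let e := T.overFinIso rfl
  exact hasRankDecompOfWidthLE_iff.2 ⟨hV, _, _, _, h.comp_iso e, hwidth.comp_iso e⟩

theorem HasRankDecompOfWidthLE.induce_compl_singleton (h : HasRankDecompOfWidthLE G k)
    (hV : 3 ≤ Nat.card V) (v : V) : HasRankDecompOfWidthLE (G.induce ({v}ᶜ : Set V)) k := by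
  obtain ⟨-, N, T, leaf, hT, hwidth⟩ := hasRankDecompOfWidthLE_iff.1 h
  obtain ⟨p, hvp, hp⟩ := hT.exists_adj_leaf hV v
  obtain ⟨W', T', π, hπ⟩ :=
    exists_isSuppression_of_leaf hT.isTree hvp (hT.ncard_neighborSet_leaf v) hp
  have hlabel : leaf ⁻¹' {leaf v, p} = {v} := by
    have leaf_ne (w : V) : leaf w ≠ p := by
      rintro rfl
      simp [hT.ncard_neighborSet_leaf] at hp
    ext w
    simp [hT.leaf_injective.eq_iff, leaf_ne]
  have hcard : 2 ≤ Nat.card ({v}ᶜ : Set V) := by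
    have := Set.ncard_add_ncard_compl {v}
    rw [Set.ncard_singleton, ← Nat.card_coe_set_eq {v}ᶜ] at this
    omega
  have : Finite W' := Set.finite_univ_iff.1 (hπ.bijOn.image_eq ▸ Set.toFinite _)
  have hT' := hT.comp_isSuppression hπ
  rw [hlabel] at hT'
  exact hT'.hasRankDecompOfWidthLE hcard (hwidth.induce_comp_isSuppression hπ _)

theorem HasRankDecompOfWidthLE.comap [Finite V'] {G' : SimpleGraph V'} {f : V → V'} {t : V'}
    (h : HasRankDecompOfWidthLE G' k) (hf : Function.Surjective f)
    (hfiber : (f ⁻¹' {t}).ncard = 2) (hinj : Set.InjOn f (f ⁻¹' {t})ᶜ) :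
    HasRankDecompOfWidthLE (G'.comap f) k := by
  obtain ⟨hcard, N, T, leaf, hT, hwidth⟩ := hasRankDecompOfWidthLE_iff.1 h
  exact (hT.attachLeaves_splitLeaf hf hfiber hinj).hasRankDecompOfWidthLE
    (hcard.trans (Nat.card_le_card_of_surjective f hf)) (hwidth.attachLeaves_splitLeaf hT f t)

end Width

section Twins

variable {V : Type*} {u v : V}

open Classical in
/-- The retraction of the vertex set onto the complement of `v` that sends `v` to `u`. -/
noncomputable def collapseTwin (huv : u ≠ v) (w : V) : ↥({v}ᶜ : Set V) :=
  if h : w = v then ⟨u, huv⟩ else ⟨w, h⟩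

theorem coe_collapseTwin [DecidableEq V] (huv : u ≠ v) (w : V) :
    (collapseTwin huv w : V) = if w = v then u else w := by
  unfold collapseTwin
  split_ifs <;> rfl

theorem collapseTwin_coe (huv : u ≠ v) (w : ↥({v}ᶜ : Set V)) : collapseTwin huv w = w :=
  dif_neg w.2

theorem collapseTwin_preimage_singleton (huv : u ≠ v) :
    collapseTwin huv ⁻¹' {⟨u, huv⟩} = {u, v} := by
  classical
  ext w
  simp only [Set.mem_preimage, Set.mem_singleton_iff, Subtype.ext_iff, coe_collapseTwin,
    Set.mem_insert_iff]
  grind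

theorem comap_collapseTwin_induce {G : SimpleGraph V} (huv : u ≠ v)
    (htwin : G.neighborSet u = G.neighborSet v) :
    (G.induce ({v}ᶜ : Set V)).comap (collapseTwin huv) = G := by
  classical
  have htwin' (w : V) : G.Adj u w ↔ G.Adj v w := Set.ext_iff.1 htwin w
  ext a b
  rw [SimpleGraph.comap_adj, SimpleGraph.induce_adj, coe_collapseTwin, coe_collapseTwin]
  grind [SimpleGraph.adj_comm, SimpleGraph.irrefl]

theorem hasRankDecompOfWidthLE_of_induce_compl_twin [Finite V] {G : SimpleGraph V} (huv : u ≠ v)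
    (htwin : G.neighborSet u = G.neighborSet v) {k : ℕ}
    (h : HasRankDecompOfWidthLE (G.induce ({v}ᶜ : Set V)) k) : HasRankDecompOfWidthLE G k := by
  classical
  rw [← comap_collapseTwin_induce huv htwin]
  have hfiber := collapseTwin_preimage_singleton huv
  refine h.comap (t := ⟨u, huv⟩) (fun w => ⟨w, collapseTwin_coe huv w⟩) ?_ ?_
  · rw [hfiber, Set.ncard_pair huv]
  · rw [hfiber]
    intro a ha b hb hab
    grind [coe_collapseTwin]

end Twins

/-- Deleting one of two twins does not change the rankwidth: if `u ≠ v`,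
`N_G(u) = N_G(v)`, and `G − v` has at least two vertices, then
`rankwidth G = rankwidth (G − v)`. -/
theorem rankwidth_deleteTwin {V : Type*} [Fintype V] (G : SimpleGraph V) (u v : V)
    (huv : u ≠ v) (htwin : G.neighborSet u = G.neighborSet v)
    (hcard : 3 ≤ Nat.card V) :
    rankwidth G = rankwidth (G.induce ({v}ᶜ : Set V)) := by
  have hwidth (k : ℕ) :
      HasRankDecompOfWidthLE G k ↔ HasRankDecompOfWidthLE (G.induce ({v}ᶜ : Set V)) k :=
    ⟨fun h => h.induce_compl_singleton hcard v,
      hasRankDecompOfWidthLE_of_induce_compl_twin huv htwin⟩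
  simp only [rankwidth, hwidth]
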